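/- Let 𝒜 be the free (noncommutative, unital) R-algebra on six generators a₁₂, a₁₃, a₂₁, a₂₃, a₃₁, a₃₂, and consider the 3×3 matrices over 𝒜: A = [[1+μ, a₁₂, a₁₃], [a₂₁, 1+μ, a₂₃], [a₃₁, a₃₂, 1+μ]], Ψ^L = [[−a₂₁, μ, λ], [1, −a₃₂, μ], [μ, 1, −a₁₃]], Ψ^R = [[−a₁₂, μ, 1], [1, −a₂₃, μ], [λ⁻¹μ, 1, −a₃₁]]. Let C be the quotient of 𝒜 by the two-sided ideal generated by the 18 entries of the matrices Ψ^L·A and A·Ψ^R. Then C is isomorphic as an R-algebra to the commutative quotient R[x] ⧸ (λx² − λx − μ² − μ, λx² − μx − μ − 1) of the polynomial ring R[x], under an isomorphism sending the class of a₁₂ to the class of x. -/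

import Mathlib

noncomputable section

open Polynomial

/-- The Laurent polynomial ring `ℤ[λ^{±1}, μ^{±1}]`. -/
abbrev R : Type := AddMonoidAlgebra ℤ (ℤ × ℤ)

/-- The variable `λ`. -/
def lam : R := AddMonoidAlgebra.single (1, 0) 1

/-- The variable `μ`. -/
def mu : R := AddMonoidAlgebra.single (0, 1) 1

/-- The Laurent monomial `λ⁻¹μ`. -/
def lamInvMu : R := AddMonoidAlgebra.single (-1, 1) 1

/-- Index type of the six generators `a_{ij}`, `1 ≤ i ≠ j ≤ 3`. -/
abbrev Idx : Type := {p : Fin 3 × Fin 3 // p.1 ≠ p.2}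

/-- The free noncommutative unital `R`-algebra on the six generators. -/
abbrev FA : Type := FreeAlgebra R Idx

/-- The generator `a_{ij}` (indices from `0`, so `a 0 1` is the paper's `a₁₂`). -/
def a (i j : Fin 3) (h : i ≠ j) : FA := FreeAlgebra.ι R ⟨(i, j), h⟩

/-- The matrix `A` of the left-handed trefoil. -/
def Amat : Matrix (Fin 3) (Fin 3) FA :=
  !![algebraMap R FA (1 + mu), a 0 1 (by decide), a 0 2 (by decide);
     a 1 0 (by decide), algebraMap R FA (1 + mu), a 1 2 (by decide);
     a 2 0 (by decide), a 2 1 (by decide), algebraMap R FA (1 + mu)]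

/-- The matrix `Ψ^L` of the left-handed trefoil. -/
def PsiL : Matrix (Fin 3) (Fin 3) FA :=
  !![-(a 1 0 (by decide)), algebraMap R FA mu, algebraMap R FA lam;
     1, -(a 2 1 (by decide)), algebraMap R FA mu;
     algebraMap R FA mu, 1, -(a 0 2 (by decide))]

/-- The matrix `Ψ^R` of the left-handed trefoil. -/
def PsiR : Matrix (Fin 3) (Fin 3) FA :=
  !![-(a 0 1 (by decide)), algebraMap R FA mu, 1;
     1, -(a 1 2 (by decide)), algebraMap R FA mu;
     algebraMap R FA lamInvMu, 1, -(a 2 0 (by decide))]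

/-- The 18 relations: the entries of `Ψ^L·A` and `A·Ψ^R` are set to `0`. -/
inductive TrefoilRel : FA → FA → Prop
  | left (i j : Fin 3) : TrefoilRel ((PsiL * Amat) i j) 0
  | right (i j : Fin 3) : TrefoilRel ((Amat * PsiR) i j) 0

/-- The cord algebra of the left-handed trefoil, presented by generators and
relations. -/
abbrev CTref : Type := RingQuot TrefoilRel

/-- The ideal `(λx² − λx − μ² − μ, λx² − μx − μ − 1)` of `R[x]`. -/
def trefIdeal : Ideal (Polynomial R) :=
  Ideal.span {C lam * X ^ 2 - C lam * X - C (mu ^ 2) - C mu,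
              C lam * X ^ 2 - C mu * X - C mu - 1}

lemma lam_mul_lamInvMu : lam * lamInvMu = mu := by
  simp [lam, mu, lamInvMu, AddMonoidAlgebra.single_mul_single]

/-- The inverse of `λ`. -/
def lamInv : R := AddMonoidAlgebra.single (-1, 0) 1

/-- The inverse of `μ`. -/
def muInv : R := AddMonoidAlgebra.single (0, -1) 1

lemma lamInv_mul_lam : lamInv * lam = 1 := by
  simp [lam, lamInv, AddMonoidAlgebra.single_mul_single, AddMonoidAlgebra.one_def,
    Prod.zero_eq_mk]

lemma muInv_mul_mu : muInv * mu = 1 := by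
  simp [mu, muInv, AddMonoidAlgebra.single_mul_single, AddMonoidAlgebra.one_def,
    Prod.zero_eq_mk]

lemma lamInvMu_eq : lamInvMu = lamInv * mu := by
  simp [lamInvMu, lamInv, mu, AddMonoidAlgebra.single_mul_single]

/-- The target algebra. -/
abbrev QTref : Type := Polynomial R ⧸ trefIdeal

/-- The class of `x`. -/
def xQ : QTref := Ideal.Quotient.mk trefIdeal X

/-- The structure map of the target algebra. -/
def cQ : R →+* QTref := algebraMap R QTref

lemma xQ_rel1 : cQ lam * xQ ^ 2 - cQ lam * xQ - cQ mu ^ 2 - cQ mu = 0 := by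
  have h : C lam * X ^ 2 - C lam * X - C (mu ^ 2) - C mu ∈ trefIdeal :=
    Ideal.subset_span (by simp)
  have h2 := Ideal.Quotient.eq_zero_iff_mem.mpr h
  simp only [map_sub, map_mul, map_pow] at h2
  exact h2

lemma xQ_rel2 : cQ lam * xQ ^ 2 - cQ mu * xQ - cQ mu - 1 = 0 := by
  have h : C lam * X ^ 2 - C mu * X - C mu - 1 ∈ trefIdeal :=
    Ideal.subset_span (by simp)
  have h2 := Ideal.Quotient.eq_zero_iff_mem.mpr h
  simp only [map_sub, map_mul, map_pow, map_one] at h2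
  exact h2

/-- Images of the generators. -/
def genVal (x : QTref) (p : Idx) : QTref :=
  !![0, x, cQ lam * x; cQ lam * x, 0, cQ lam * x; x, x, 0] p.1.1 p.1.2

/-- The map from the free algebra. -/
def freeMap : FA →ₐ[R] QTref := FreeAlgebra.lift R (genVal xQ)

lemma freeMap_a (i j : Fin 3) (h : i ≠ j) : freeMap (a i j h) = genVal xQ ⟨(i, j), h⟩ := by
  simp [freeMap, a]

lemma freeMap_alg (r : R) : freeMap (algebraMap R FA r) = cQ r := by
  rw [AlgHom.commutes]; rfl

lemma freeMap_rel {u v : FA} (h : TrefoilRel u v) : freeMap u = freeMap v := by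
  have h1 := xQ_rel1
  have h2 := xQ_rel2
  have h3 := congrArg cQ lamInv_mul_lam
  rw [map_mul, map_one] at h3
  cases h with
  | left i j =>
    fin_cases i <;> fin_cases j <;>
    simp only [PsiL, Amat, Matrix.mul_apply, Fin.sum_univ_three, freeMap_a, genVal,
      Matrix.of_apply, Matrix.cons_val, map_add, map_mul, map_neg, map_one, map_zero,
      freeMap_alg, Fin.zero_eta, Fin.mk_one, Fin.reduceFinMk] <;> grind
  | right i j =>
    fin_cases i <;> fin_cases j <;>
    simp only [PsiR, Amat, Matrix.mul_apply, Fin.sum_univ_three, freeMap_a, genVal,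
      Matrix.of_apply, Matrix.cons_val, map_add, map_mul, map_neg, map_one, map_zero,
      freeMap_alg, lamInvMu_eq, Fin.zero_eta, Fin.mk_one, Fin.reduceFinMk] <;> grind

/-- The forward map. -/
def fwd : CTref →ₐ[R] QTref := RingQuot.liftAlgHom R ⟨freeMap, fun _ _ h => freeMap_rel h⟩

lemma fwd_mk (u : FA) : fwd (RingQuot.mkAlgHom R TrefoilRel u) = freeMap u := by
  simp [fwd]

/-- The generators in the quotient. -/
def b (i j : Fin 3) (h : i ≠ j) : CTref := RingQuot.mkAlgHom R TrefoilRel (a i j h)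

lemma relL (i j : Fin 3) : RingQuot.mkAlgHom R TrefoilRel ((PsiL * Amat) i j) = 0 := by
  rw [RingQuot.mkAlgHom_rel R (TrefoilRel.left i j), map_zero]

lemma relR (i j : Fin 3) : RingQuot.mkAlgHom R TrefoilRel ((Amat * PsiR) i j) = 0 := by
  rw [RingQuot.mkAlgHom_rel R (TrefoilRel.right i j), map_zero]

lemma core {B : Type} [Ring B] [Algebra R B] (g : FA →ₐ[R] B)
    (hL : ∀ i j, g ((PsiL * Amat) i j) = 0) (hR : ∀ i j, g ((Amat * PsiR) i j) = 0) :
    g (a 2 1 (by decide)) = g (a 0 1 (by decide)) ∧ g (a 1 2 (by decide)) = lam • g (a 0 1 (by decide)) ∧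
    g (a 0 2 (by decide)) = lam • g (a 0 1 (by decide)) ∧ g (a 1 0 (by decide)) = lam • g (a 0 1 (by decide)) ∧
    g (a 2 0 (by decide)) = g (a 0 1 (by decide)) ∧
    lam • (g (a 0 1 (by decide)) * g (a 0 1 (by decide))) =
      lam • g (a 0 1 (by decide)) + (mu ^ 2) • (1 : B) + mu • (1 : B) ∧
    lam • (g (a 0 1 (by decide)) * g (a 0 1 (by decide))) =
      mu • g (a 0 1 (by decide)) + mu • (1 : B) + 1 := by
  have halg (r : R) : g (algebraMap R FA r) = r • 1 := by
    rw [AlgHom.commutes, Algebra.algebraMap_eq_smul_one]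
  have l22 := hL 1 1
  have l33 := hL 2 2
  have r11 := hR 0 0
  have r22 := hR 1 1
  have r33 := hR 2 2
  have l12 := hL 0 1
  have l21 := hL 1 0
  simp only [PsiL, PsiR, Amat, Matrix.mul_apply, Fin.sum_univ_three, Matrix.of_apply,
    Matrix.cons_val, map_add, map_mul, map_neg, map_one, halg, one_mul, smul_mul_assoc,
    mul_smul_comm, mul_one, add_mul, mul_add, neg_mul, mul_neg] at l22 l33 r11 r22 r33 l12 l21
  generalize g (a 0 1 (by decide)) = x at *
  generalize g (a 0 2 (by decide)) = x13 at *
  generalize g (a 1 0 (by decide)) = x21 at *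
  generalize g (a 1 2 (by decide)) = x23 at *
  generalize g (a 2 0 (by decide)) = x31 at *
  generalize g (a 2 1 (by decide)) = x32 at *
  have canc {u v : B} (h : mu • u = mu • v) : u = v := by
    have h2 := congrArg (fun t => muInv • t) h
    simpa only [smul_smul, muInv_mul_mu, one_smul] using h2
  have e32 : x32 = x := by linear_combination (norm := module) -l22
  have e23 : x23 = x13 := by linear_combination (norm := module) l33
  have e13 : x13 = lam • x := by
    apply canc
    have h2 := congrArg (fun t => lam • t) r11
    simp only [smul_add, smul_neg, smul_zero, smul_smul lam lamInvMu, lam_mul_lamInvMu] at h2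
    linear_combination (norm := module) h2
  have e21 : x21 = x23 := by
    apply canc
    linear_combination (norm := module) r22
  have e31 : x31 = x32 := by
    apply canc
    linear_combination (norm := module) -r33
  subst e31 e21 e32 e23 e13
  simp only [smul_mul_assoc, mul_smul_comm] at l12 l21
  refine ⟨rfl, rfl, rfl, rfl, rfl, ?_, ?_⟩
  · linear_combination (norm := module) -l12
  · linear_combination (norm := module) -l21

lemma core_b :
    b 2 1 (by decide) = b 0 1 (by decide) ∧ b 1 2 (by decide) = lam • b 0 1 (by decide) ∧
    b 0 2 (by decide) = lam • b 0 1 (by decide) ∧ b 1 0 (by decide) = lam • b 0 1 (by decide) ∧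
    b 2 0 (by decide) = b 0 1 (by decide) ∧
    lam • (b 0 1 (by decide) * b 0 1 (by decide)) =
      lam • b 0 1 (by decide) + (mu ^ 2) • (1 : CTref) + mu • (1 : CTref) ∧
    lam • (b 0 1 (by decide) * b 0 1 (by decide)) =
      mu • b 0 1 (by decide) + mu • (1 : CTref) + 1 :=
  core (B := CTref) (RingQuot.mkAlgHom R TrefoilRel) relL relR

lemma cancel_three {B : Type} [Ring B] (u v w : B) : u + v + w - u - v - w = 0 := by
  abel

/-- The backward map. -/
def bwd : QTref →ₐ[R] CTref :=
  Ideal.Quotient.liftₐ trefIdeal (aeval (b 0 1 (by decide))) (by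
    intro p hp
    have hle : trefIdeal ≤ RingHom.ker (aeval (b 0 1 (by decide)) : Polynomial R →ₐ[R] CTref) := by
      refine Ideal.span_le.mpr ?_
      intro q hq
      rcases hq with rfl | rfl
      · have h := core_b.2.2.2.2.2.1
        simp only [Algebra.smul_def, mul_one] at h
        simp [pow_two, h]
        exact cancel_three (B := CTref) _ _ _
      · have h := core_b.2.2.2.2.2.2
        simp only [Algebra.smul_def, mul_one] at h
        simp [pow_two, h]
        exact cancel_three (B := CTref) _ _ _
    exact hle hp)

lemma bwd_x : bwd xQ = b 0 1 (by decide) := by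
  have h : bwd xQ = aeval (b 0 1 (by decide)) (X : Polynomial R) := rfl
  rw [h, aeval_X]

lemma fwd_b (i j : Fin 3) (h : i ≠ j) : fwd (b i j h) = genVal xQ ⟨(i, j), h⟩ := by
  rw [b, fwd_mk, freeMap_a]

lemma bwd_c (r : R) (y : QTref) : bwd (cQ r * y) = r • bwd y := by
  have h : cQ r * y = r • y := (Algebra.smul_def r y).symm
  rw [h, map_smul]

lemma bwd_gen (i j : Fin 3) (h : i ≠ j) : bwd (genVal xQ ⟨(i, j), h⟩) = b i j h := by
  obtain ⟨h1, h2, h3, h4, h5, -⟩ := core_b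
  fin_cases i <;> fin_cases j <;>
  first
  | exact absurd rfl h
  | simp [genVal, bwd_x, bwd_c, h1, h2, h3, h4, h5]

lemma fwd_bwd : fwd.comp bwd = AlgHom.id R QTref := by
  apply Ideal.Quotient.algHom_ext
  apply Polynomial.algHom_ext
  change fwd (bwd xQ) = xQ
  rw [bwd_x, fwd_b]
  simp [genVal]

lemma bwd_fwd : bwd.comp fwd = AlgHom.id R CTref := by
  apply RingQuot.ringQuot_ext'
  apply FreeAlgebra.hom_ext
  funext p
  obtain ⟨⟨i, j⟩, h⟩ := p
  change bwd (fwd (b i j h)) = b i j h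
  rw [fwd_b, bwd_gen]

/-- The cord algebra of the left-handed trefoil is
`ℤ[λ^{±1},μ^{±1}][x]/(λx²−λx−μ²−μ, λx²−μx−μ−1)`, via an isomorphism sending
the class of `a₁₂` to the class of `x`. -/
theorem trefoil_cordAlgebra :
    ∃ e : CTref ≃ₐ[R] Polynomial R ⧸ trefIdeal,
      e (RingQuot.mkAlgHom R TrefoilRel (a 0 1 (by decide))) =
        Ideal.Quotient.mk trefIdeal X := by
  refine ⟨AlgEquiv.ofAlgHom fwd bwd fwd_bwd bwd_fwd, ?_⟩
  change fwd (b 0 1 (by decide)) = xQ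
  rw [fwd_b]
  simp [genVal]
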